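/- Let L ≥ 2 and 1 ≤ j ≤ L−1. The Kennedy–Tasaki dual of the Heisenberg bond, U_KT (Sˣ_jSˣ_{j+1}+Sʸ_jSʸ_{j+1}+Sᶻ_jSᶻ_{j+1}) U_KT, commutes with the global quarter-turn Y_{π/2} = ∏_{k=1}^{L} exp(−i(π/2)Sʸ_k) and with the global π-rotation Z_π = ∏_{k=1}^{L} exp(−iπSᶻ_k); that is, it respects the ℤ₄^y ⋊ ℤ₂^z symmetry. -/

import Mathlib

noncomputable section
open Complex Matrix

/-- The Hilbert space operators of the `L`-site spin-1 chain: matrices on `(ℂ³)^{⊗L}`,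
with the tensor factors indexed by sites and the single-site ordered basis `(|+⟩,|0⟩,|−⟩)`. -/
abbrev Op (L : ℕ) : Type := Matrix (Fin L → Fin 3) (Fin L → Fin 3) ℂ

/-- The spin-1 matrix `Sˣ`. -/
def Sx : Matrix (Fin 3) (Fin 3) ℂ :=
  ((Real.sqrt 2 : ℝ) : ℂ)⁻¹ • !![0, 1, 0; 1, 0, 1; 0, 1, 0]

/-- The spin-1 matrix `Sʸ`. -/
def Sy : Matrix (Fin 3) (Fin 3) ℂ :=
  ((Real.sqrt 2 : ℝ) : ℂ)⁻¹ • !![0, -I, 0; I, 0, -I; 0, I, 0]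

/-- The spin-1 matrix `Sᶻ = diag(1,0,−1)`. -/
def Sz : Matrix (Fin 3) (Fin 3) ℂ := !![1, 0, 0; 0, 0, 0; 0, 0, -1]

/-- `site A j` is the one-site operator `A` acting on site `j` and identity elsewhere. -/
def site {L : ℕ} (A : Matrix (Fin 3) (Fin 3) ℂ) (j : Fin L) : Op L :=
  Matrix.of fun f g => ∏ k : Fin L, if k = j then A (f k) (g k) else (if f k = g k then 1 else 0)

/-- One factor `exp(iπ Sᶻ_u Sˣ_v)` of the Kennedy–Tasaki transformation. -/
def ktFactor {L : ℕ} (u v : Fin L) : Op L :=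
  NormedSpace.exp (((Real.pi : ℂ) * I) • (site Sz u * site Sx v))

/-- The Kennedy–Tasaki transformation `U_KT = ∏_{1 ≤ u < v ≤ L} exp(iπ Sᶻ_u Sˣ_v)`
(the factors pairwise commute, so the ordering is immaterial). -/
def UKT (L : ℕ) : Op L :=
  ((List.finRange L).map fun u =>
    ((List.finRange L).map fun v => if u < v then ktFactor u v else 1).prod).prod

/-- The p-wave basis vector `|↑⟩ = (|+⟩ − |−⟩)/√2`. -/
def up : Fin 3 → ℂ := ![((Real.sqrt 2 : ℝ) : ℂ)⁻¹, 0, -((Real.sqrt 2 : ℝ) : ℂ)⁻¹]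

/-- The p-wave basis vector `|↓⟩ = |0⟩`. -/
def down : Fin 3 → ℂ := ![0, 1, 0]

/-- The p-wave basis vector `|h⟩ = (|+⟩ + |−⟩)/√2`. -/
def hole : Fin 3 → ℂ := ![((Real.sqrt 2 : ℝ) : ℂ)⁻¹, 0, ((Real.sqrt 2 : ℝ) : ℂ)⁻¹]

/-- The rank-one operator `|a⟩⟨b|`. -/
def ketbra (a b : Fin 3 → ℂ) : Matrix (Fin 3) (Fin 3) ℂ := Matrix.vecMulVec a (star b)

/-- `σˣ = |↑⟩⟨↓| + |↓⟩⟨↑|` (annihilating `|h⟩`). -/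
def sigx : Matrix (Fin 3) (Fin 3) ℂ := ketbra up down + ketbra down up

/-- `σʸ = −i|↑⟩⟨↓| + i|↓⟩⟨↑|` (annihilating `|h⟩`). -/
def sigy : Matrix (Fin 3) (Fin 3) ℂ := (-I) • ketbra up down + I • ketbra down up

/-- `σᶻ = |↑⟩⟨↑| − |↓⟩⟨↓|` (annihilating `|h⟩`). -/
def sigz : Matrix (Fin 3) (Fin 3) ℂ := ketbra up up - ketbra down down

/-- `n = |↑⟩⟨↑| + |↓⟩⟨↓|` (annihilating `|h⟩`). -/
def nMat : Matrix (Fin 3) (Fin 3) ℂ := ketbra up up + ketbra down down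

/-- `h = |h⟩⟨h|`. -/
def hMat : Matrix (Fin 3) (Fin 3) ℂ := ketbra hole hole

/-- `P = ⊗_{j=1}^L n_j`, the orthogonal projection onto the hole-free subspace. -/
def Pproj (L : ℕ) : Op L := Matrix.of fun f g => ∏ k : Fin L, nMat (f k) (g k)

/-- The Heisenberg coupling `S_j · S_k`. -/
def heis {L : ℕ} (j k : Fin L) : Op L :=
  site Sx j * site Sx k + site Sy j * site Sy k + site Sz j * site Sz k

/-- The bilinear-biquadratic Hamiltonian
`H_BLBQ(θ) = Σ_{j=1}^{L−1} [cosθ (S_j·S_{j+1}) + sinθ (S_j·S_{j+1})²]`. -/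
def HBLBQ (L : ℕ) (θ : ℝ) : Op L :=
  ∑ j : Fin L, if h : (j : ℕ) + 1 < L then
    ((Real.cos θ : ℝ) : ℂ) • heis j ⟨(j : ℕ) + 1, h⟩
      + ((Real.sin θ : ℝ) : ℂ) • (heis j ⟨(j : ℕ) + 1, h⟩) ^ 2
  else 0

/-- The self-dual Hamiltonian `H_SD(θ) = H_BLBQ(θ) + U_KT H_BLBQ(θ) U_KT`. -/
def HSD (L : ℕ) (θ : ℝ) : Op L := HBLBQ L θ + UKT L * HBLBQ L θ * UKT L

/-- The spin-1/2 XXZ Hamiltonian written in the p-wave basis: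
`H_XXZ(θ) = (cosθ−sinθ) Σ_j (−σˣ_jσˣ_{j+1} + σʸ_jσʸ_{j+1}) + sinθ Σ_j σᶻ_jσᶻ_{j+1}`. -/
def HXXZ (L : ℕ) (θ : ℝ) : Op L :=
  ((Real.cos θ - Real.sin θ : ℝ) : ℂ) •
    (∑ j : Fin L, if h : (j : ℕ) + 1 < L then
      -(site sigx j * site sigx ⟨(j : ℕ) + 1, h⟩) + site sigy j * site sigy ⟨(j : ℕ) + 1, h⟩
    else 0)
  + ((Real.sin θ : ℝ) : ℂ) •
    (∑ j : Fin L, if h : (j : ℕ) + 1 < L then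
      site sigz j * site sigz ⟨(j : ℕ) + 1, h⟩
    else 0)

/-- The global product `∏_{j=1}^L exp(c • A_j)` of commuting single-site exponentials. -/
def globalProd (L : ℕ) (A : Matrix (Fin 3) (Fin 3) ℂ) (c : ℂ) : Op L :=
  ((List.finRange L).map fun j => NormedSpace.exp (c • site A j)).prod

/-- The symmetry flux `F^y_j = exp(−iπ Σ_{k<j} Sʸ_k) · Sʸ_j`. -/
def fluxY (L : ℕ) (j : Fin L) : Op L :=
  NormedSpace.exp ((-((Real.pi : ℂ) * I)) •
    ∑ k : Fin L, if (k : ℕ) < (j : ℕ) then site Sy k else 0) * site Sy j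


theorem exp_idem {n : Type*} [Fintype n] [DecidableEq n] (P : Matrix n n ℂ) (hP : P * P = P) (c : ℂ) :
    NormedSpace.exp (c • P) = 1 + (Complex.exp c - 1) • P := by
  have hpow : ∀ m : ℕ, P ^ (m+1) = P := by
    intro m
    induction m with
    | zero => simp
    | succ m ih => rw [pow_succ, ih, hP]
  have hs : HasSum (fun m : ℕ => ((m.factorial : ℂ)⁻¹ * c ^ m)) (Complex.exp c) := by
    have := NormedSpace.exp_series_hasSum_exp' (𝕂 := ℂ) c
    rw [← Complex.exp_eq_exp_ℂ] at this
    simpa [smul_eq_mul] using this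
  have h2 : HasSum (fun m : ℕ => (if m = 0 then (1 - P) else 0)) (1 - P) := hasSum_ite_eq 0 (1 - P)
  have h3 := h2.add (hs.smul_const P)
  rw [NormedSpace.exp_eq_tsum ℂ]
  have h4 : (fun m : ℕ => ((m.factorial : ℂ)⁻¹ • (c • P) ^ m)) =
      fun m : ℕ => (if m = 0 then (1 - P) else 0) + ((m.factorial : ℂ)⁻¹ * c ^ m) • P := by
    funext m
    cases m with
    | zero => simp
    | succ m => simp [smul_pow, hpow, smul_smul]
  show (∑' m : ℕ, ((m.factorial : ℂ)⁻¹ • (c • P) ^ m)) = _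
  rw [h4, h3.tsum_eq, sub_smul, one_smul]
  abel

theorem exp_cube {n : Type*} [Fintype n] [DecidableEq n] (M : Matrix n n ℂ) (hM : M * M * M = M) (c : ℂ) :
    NormedSpace.exp (c • M) = 1 + Complex.sinh c • M + (Complex.cosh c - 1) • (M * M) := by
  have hM' : M * (M * M) = M := by rw [← mul_assoc, hM]
  have e : c • M = c • ((1/2 : ℂ) • (M * M + M)) + (-c) • ((1/2 : ℂ) • (M * M - M)) := by
    module
  have h4 : M * M * (M * M) = M * M := by rw [← mul_assoc, hM]
  have hc : (M * M + M) * (M * M - M) = 0 := by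
    simp only [mul_add, add_mul, mul_sub, sub_mul, h4, hM, hM']; abel
  have hc' : (M * M - M) * (M * M + M) = 0 := by
    simp only [mul_add, add_mul, mul_sub, sub_mul, h4, hM, hM']; abel
  rw [e, Matrix.exp_add_of_commute, exp_idem, exp_idem]
  · simp only [mul_add, add_mul, mul_one, one_mul, smul_mul_assoc, mul_smul_comm, hc, smul_zero]
    rw [Complex.sinh, Complex.cosh]
    module
  · simp only [mul_sub, sub_mul, smul_mul_assoc, mul_smul_comm, h4, hM, hM']
    module
  · simp only [mul_add, add_mul, smul_mul_assoc, mul_smul_comm, h4, hM, hM']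
    module
  · show _ = _
    simp only [smul_mul_assoc, mul_smul_comm, hc, hc', smul_zero]

abbrev M3 := Matrix (Fin 3) (Fin 3) ℂ

def tens {L : ℕ} (A : Fin L → M3) : Op L := Matrix.of fun f g => ∏ k, A k (f k) (g k)

theorem tens_mul {L : ℕ} (A B : Fin L → M3) : tens A * tens B = tens (A * B) := by
  ext f g
  simp only [tens, Matrix.mul_apply, Matrix.of_apply, Pi.mul_apply, ← Finset.prod_mul_distrib]
  rw [Finset.prod_univ_sum, Fintype.piFinset_univ]

theorem tens_one {L : ℕ} : tens (1 : Fin L → M3) = 1 := by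
  ext f g
  simp only [tens, Matrix.of_apply, Pi.one_apply, Matrix.one_apply]
  rw [Finset.prod_ite_zero]
  simp [funext_iff]

theorem site_eq {L : ℕ} (A : M3) (j : Fin L) :
    site A j = tens (fun k => if k = j then A else 1) := by
  ext f g
  simp only [tens, site, Matrix.of_apply]
  refine Finset.prod_congr rfl fun k _ => ?_
  split_ifs <;> simp_all [Matrix.one_apply]

theorem site_one {L : ℕ} (j : Fin L) : site 1 j = 1 := by
  rw [site_eq, ← tens_one]; congr 1; funext k; simp

theorem site_mul {L : ℕ} (A B : M3) (j : Fin L) : site A j * site B j = site (A * B) j := by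
  rw [site_eq, site_eq, site_eq, tens_mul]; congr 1; funext k
  simp only [Pi.mul_apply]; split_ifs <;> simp

theorem site_apply {L : ℕ} (A : M3) (j : Fin L) (f g) :
    site A j f g = A (f j) (g j) * ∏ k ∈ Finset.univ.erase j, (if f k = g k then 1 else 0) := by
  simp only [site, Matrix.of_apply]
  rw [← Finset.mul_prod_erase _ _ (Finset.mem_univ j)]
  simp only [if_true]
  congr 1
  refine Finset.prod_congr rfl fun k hk => ?_
  simp [Finset.ne_of_mem_erase hk]

theorem site_add {L : ℕ} (A B : M3) (j : Fin L) : site (A + B) j = site A j + site B j := by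
  ext f g; simp only [site_apply, Matrix.add_apply, add_mul]

theorem site_smul {L : ℕ} (c : ℂ) (A : M3) (j : Fin L) : site (c • A) j = c • site A j := by
  ext f g; simp only [site_apply, Matrix.smul_apply, smul_eq_mul, mul_assoc]

theorem site_comm {L : ℕ} (A B : M3) (i j : Fin L) (h : i ≠ j ∨ Commute A B) :
    Commute (site A i) (site B j) := by
  show _ = _
  rw [site_eq, site_eq, tens_mul, tens_mul]; congr 1; funext k
  simp only [Pi.mul_apply]
  rcases h with h | h
  · by_cases h1 : k = i <;> by_cases h2 : k = j <;> simp_all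
  · split_ifs <;> simp [h.eq]

theorem site_exp {L : ℕ} (A : M3) (hA : A * A * A = A) (c : ℂ) (j : Fin L) :
    NormedSpace.exp (c • site A j) =
      site (1 + Complex.sinh c • A + (Complex.cosh c - 1) • (A * A)) j := by
  rw [exp_cube _ (by rw [site_mul, site_mul, hA])]
  simp only [site_add, site_smul, site_one, site_mul]

theorem prod_ite_single {α M : Type*} [DecidableEq α] [Monoid M] (l : List α) (hl : l.Nodup)
    (k : α) (a : α → M) :
    (l.map fun u => if k = u then a u else 1).prod = if k ∈ l then a k else 1 := by
  induction l with
  | nil => simp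
  | cons x l ih =>
    rw [List.nodup_cons] at hl
    rw [List.map_cons, List.prod_cons, ih hl.2]
    by_cases h : k = x
    · subst h; simp [hl.1]
    · simp [h]

theorem tens_list {L : ℕ} (a : Fin L → Fin L → M3) (l : List (Fin L)) :
    (l.map fun v => tens (a v)).prod = tens (fun w => (l.map fun v => a v w).prod) := by
  induction l with
  | nil => exact tens_one.symm
  | cons x l ih => rw [List.map_cons, List.prod_cons, ih, tens_mul]; rfl

theorem site_list {L : ℕ} (a : Fin L → M3) :
    ((List.finRange L).map fun v => site (a v) v).prod = tens a := by
  simp only [site_eq]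
  rw [tens_list (fun v k => if k = v then a v else 1)]
  congr 1; funext w
  rw [prod_ite_single _ (List.nodup_finRange L)]
  simp

theorem globalProd_eq {L : ℕ} (A : M3) (hA : A * A * A = A) (c : ℂ) :
    globalProd L A c =
      tens (fun _ => 1 + Complex.sinh c • A + (Complex.cosh c - 1) • (A * A)) := by
  unfold globalProd
  simp only [site_exp A hA]
  exact site_list _

def s2 : ℂ := ((Real.sqrt 2 : ℝ) : ℂ)⁻¹
theorem s2_sq : s2 * s2 = 1/2 := by
  unfold s2
  rw [← mul_inv, ← Complex.ofReal_mul, Real.mul_self_sqrt (by norm_num)]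
  norm_num

def Rx : M3 := !![0,0,-1;0,-1,0;-1,0,0]
def Rz : M3 := !![-1,0,0;0,1,0;0,0,-1]
def qx : M3 := !![1/2,0,1/2;0,1,0;1/2,0,1/2]
def qz : M3 := !![1,0,0;0,0,0;0,0,1]
def qy : M3 := !![1/2,0,-1/2;0,1,0;-1/2,0,1/2]

theorem Sx_eq : Sx = !![0,s2,0;s2,0,s2;0,s2,0] := by
  unfold Sx; ext i j; fin_cases i <;> fin_cases j <;> simp [s2]
theorem Sy_eq : Sy = !![0,-(s2*I),0;s2*I,0,-(s2*I);0,s2*I,0] := by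
  unfold Sy; ext i j; fin_cases i <;> fin_cases j <;> simp [s2]

theorem SxSx : Sx * Sx = qx := by
  rw [Sx_eq, qx]; ext i j; fin_cases i <;> fin_cases j <;> simp [Matrix.mul_apply, Fin.sum_univ_three, s2_sq] <;> norm_num
theorem SzSz : Sz * Sz = qz := by
  rw [Sz, qz]; ext i j; fin_cases i <;> fin_cases j <;> simp [Matrix.mul_apply, Fin.sum_univ_three]
theorem SySy : Sy * Sy = qy := by
  have h := s2_sq
  have hI := Complex.I_mul_I
  rw [Sy_eq, qy]; ext i j; fin_cases i <;> fin_cases j <;> simp [Matrix.mul_apply, Fin.sum_univ_three] <;> grind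

theorem Rx_q : Rx = 1 - (2:ℂ) • qx := by
  rw [Rx, qx]; ext i j; fin_cases i <;> fin_cases j <;> simp [Matrix.one_apply] <;> norm_num
theorem Rz_q : Rz = 1 - (2:ℂ) • qz := by
  rw [Rz, qz]; ext i j; fin_cases i <;> fin_cases j <;> simp [Matrix.one_apply] <;> norm_num

theorem SxCube : Sx * Sx * Sx = Sx := by
  rw [SxSx, Sx_eq, qx]; ext i j; fin_cases i <;> fin_cases j <;> simp [Matrix.mul_apply, Fin.sum_univ_three] <;> ring
theorem SyCube : Sy * Sy * Sy = Sy := by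
  rw [SySy, Sy_eq, qy]; ext i j; fin_cases i <;> fin_cases j <;> simp [Matrix.mul_apply, Fin.sum_univ_three] <;> ring
theorem SzCube : Sz * Sz * Sz = Sz := by
  rw [SzSz, Sz, qz]; ext i j; fin_cases i <;> fin_cases j <;> simp [Matrix.mul_apply, Fin.sum_univ_three]
theorem qxqz : Commute qx qz := by
  show _ = _
  rw [qx, qz]; ext i j; fin_cases i <;> fin_cases j <;> simp [Matrix.mul_apply, Fin.sum_univ_three]
theorem qxqx : qx * qx = qx := by
  rw [qx]; ext i j; fin_cases i <;> fin_cases j <;> simp [Matrix.mul_apply, Fin.sum_univ_three] <;> norm_num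
theorem qzqz : qz * qz = qz := by
  rw [qz]; ext i j; fin_cases i <;> fin_cases j <;> simp [Matrix.mul_apply, Fin.sum_univ_three]
theorem qzSx : qz * Sx = Sx - Sx * qz := by
  rw [Sx_eq, qz]; ext i j; fin_cases i <;> fin_cases j <;> simp [Matrix.mul_apply, Fin.sum_univ_three]
theorem qxSz : qx * Sz = Sz - Sz * qx := by
  rw [Sz, qx]; ext i j; fin_cases i <;> fin_cases j <;> simp [Matrix.mul_apply, Fin.sum_univ_three] <;> norm_num
theorem Sy_comm : Sy = (-I) • (Sz * Sx - Sx * Sz) := by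
  rw [Sy_eq, Sz, Sx_eq]; ext i j; fin_cases i <;> fin_cases j <;> simp [Matrix.mul_apply, Fin.sum_univ_three] <;> ring
theorem RxRx : Rx * Rx = 1 := by
  rw [Rx]; ext i j; fin_cases i <;> fin_cases j <;> simp [Matrix.mul_apply, Fin.sum_univ_three, Matrix.one_apply]
theorem RzRz : Rz * Rz = 1 := by
  rw [Rz]; ext i j; fin_cases i <;> fin_cases j <;> simp [Matrix.mul_apply, Fin.sum_univ_three, Matrix.one_apply]
theorem RxSx : Rx * Sx = (-1:ℂ) • Sx := by
  rw [Rx, Sx_eq]; ext i j; fin_cases i <;> fin_cases j <;> simp [Matrix.mul_apply, Fin.sum_univ_three]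
theorem SzRz : Sz * Rz = (-1:ℂ) • Sz := by
  rw [Rz, Sz]; ext i j; fin_cases i <;> fin_cases j <;> simp [Matrix.mul_apply, Fin.sum_univ_three]

def yM : M3 := !![1/2,-s2,1/2;s2,0,-s2;1/2,s2,1/2]

theorem yM_eq : 1 + Complex.sinh (-(((Real.pi / 2 : ℝ) : ℂ) * I)) • Sy +
    (Complex.cosh (-(((Real.pi / 2 : ℝ) : ℂ) * I)) - 1) • (Sy * Sy) = yM := by
  have h1 : Complex.sinh (-(((Real.pi / 2 : ℝ) : ℂ) * I)) = -I := by
    rw [Complex.sinh_neg, Complex.sinh_mul_I, ← Complex.ofReal_sin]; simp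
  have h2 : Complex.cosh (-(((Real.pi / 2 : ℝ) : ℂ) * I)) = 0 := by
    rw [Complex.cosh_neg, Complex.cosh_mul_I, ← Complex.ofReal_cos]; simp
  have hI := Complex.I_mul_I
  rw [h1, h2, SySy, Sy_eq, yM, qy]; ext i j; fin_cases i <;> fin_cases j <;> simp [Matrix.one_apply] <;> grind

theorem zM_eq : 1 + Complex.sinh (-((Real.pi : ℂ) * I)) • Sz +
    (Complex.cosh (-((Real.pi : ℂ) * I)) - 1) • (Sz * Sz) = Rz := by
  rw [Complex.sinh_neg, Complex.sinh_mul_I, Complex.cosh_neg, Complex.cosh_mul_I, SzSz, Rz_q]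
  simp only [Complex.sin_pi, Complex.cos_pi]
  module

def Ya : M3 := Sy * Rz
def Yb : M3 := Rx * Sy
theorem Ya_eq : Ya = !![0,-(s2*I),0;-(s2*I),0,(s2*I);0,s2*I,0] := by
  rw [Ya, Sy_eq, Rz]; ext i j; fin_cases i <;> fin_cases j <;> simp [Matrix.mul_apply, Fin.sum_univ_three]
theorem Yb_eq : Yb = !![0,-(s2*I),0;-(s2*I),0,(s2*I);0,s2*I,0] := by
  rw [Yb, Sy_eq, Rx]; ext i j; fin_cases i <;> fin_cases j <;> simp [Matrix.mul_apply, Fin.sum_univ_three]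

theorem yX : Sx * yM = yM * ((1:ℂ) • Sz) := by
  have h := s2_sq
  rw [Sx_eq, Sz, yM]; ext i j; fin_cases i <;> fin_cases j <;> simp [Matrix.mul_apply, Fin.sum_univ_three] <;> grind
theorem yZ : Sz * yM = yM * ((-1:ℂ) • Sx) := by
  have h := s2_sq
  rw [Sx_eq, Sz, yM]; ext i j; fin_cases i <;> fin_cases j <;> simp [Matrix.mul_apply, Fin.sum_univ_three] <;> grind
theorem yA : Ya * yM = yM * ((-1:ℂ) • Ya) := by
  have h := s2_sq
  rw [Ya_eq, yM]; ext i j; fin_cases i <;> fin_cases j <;> simp [Matrix.mul_apply, Fin.sum_univ_three] <;> grind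
theorem yB : Yb * yM = yM * ((-1:ℂ) • Yb) := by
  rw [Yb_eq, ← Ya_eq, yA]
theorem zX : Sx * Rz = Rz * ((-1:ℂ) • Sx) := by
  rw [Sx_eq, Rz]; ext i j; fin_cases i <;> fin_cases j <;> simp [Matrix.mul_apply, Fin.sum_univ_three]
theorem zZ : Sz * Rz = Rz * ((1:ℂ) • Sz) := by
  rw [Sz, Rz]; ext i j; fin_cases i <;> fin_cases j <;> simp [Matrix.mul_apply, Fin.sum_univ_three]
theorem zA : Ya * Rz = Rz * ((-1:ℂ) • Ya) := by
  rw [Ya_eq, Rz]; ext i j; fin_cases i <;> fin_cases j <;> simp [Matrix.mul_apply, Fin.sum_univ_three]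
theorem zB : Yb * Rz = Rz * ((-1:ℂ) • Yb) := by
  rw [Yb_eq, ← Ya_eq, zA]

theorem bond_conj {L : ℕ} (i j : Fin L) (A B A' B' y : M3) (a b : ℂ) {c : ℂ} (hab : a * b = c)
    (hA : A * y = y * (a • A')) (hB : B * y = y * (b • B')) :
    site A i * site B j * tens (fun _ => y) = tens (fun _ => y) * (c • (site A' i * site B' j)) := by
  have key : ∀ (A A' : M3) (k : Fin L), A * y = y * A' →
      site A k * tens (fun _ => y) = tens (fun _ => y) * site A' k := by
    intro A A' k h
    rw [site_eq, site_eq, tens_mul, tens_mul]; congr 1; funext w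
    simp only [Pi.mul_apply]; split_ifs <;> simp [h]
  rw [mul_assoc, key _ _ _ hB, ← mul_assoc, key _ _ _ hA, mul_assoc, site_smul, site_smul,
    smul_mul_smul_comm, hab]

theorem ktFactor_eq {L : ℕ} (u v : Fin L) (h : u ≠ v) :
    ktFactor u v = 1 - (2:ℂ) • (site qz u * site qx v) := by
  have hc := site_comm Sz Sx u v (Or.inl h)
  have h2 : site Sz u * site Sx v * (site Sz u * site Sx v) = site qz u * site qx v := by
    rw [hc.symm.mul_mul_mul_comm, site_mul, site_mul, SzSz, SxSx]
  unfold ktFactor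
  rw [exp_cube]
  · rw [h2, Complex.sinh_mul_I, Complex.cosh_mul_I]
    simp only [Complex.sin_pi, Complex.cos_pi]
    module
  · rw [h2, (site_comm qx Sz v u (Or.inl h.symm)).mul_mul_mul_comm, site_mul, site_mul,
      ← SzSz, ← SxSx, SzCube, SxCube]

theorem push_list {M α : Type*} [Monoid M] (l : List α) (a s : α → M) (T : M)
    (h1 : ∀ i ∈ l, a i * T = T * s i * a i) (h2 : ∀ i ∈ l, ∀ k ∈ l, Commute (a i) (s k)) :
    (l.map a).prod * T = T * (l.map s).prod * (l.map a).prod := by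
  induction l with
  | nil => simp
  | cons x l ih =>
    have ih' := ih (fun i hi => h1 i (List.mem_cons_of_mem _ hi))
      (fun i hi k hk => h2 i (List.mem_cons_of_mem _ hi) k (List.mem_cons_of_mem _ hk))
    have hc : Commute (a x) (l.map s).prod := by
      apply Commute.list_prod_right
      intro y hy
      obtain ⟨k, hk, rfl⟩ := List.mem_map.1 hy
      exact h2 x (by simp) k (by simp [hk])
    simp only [List.map_cons, List.prod_cons]
    calc a x * (l.map a).prod * T = (a x * T) * (l.map s).prod * (l.map a).prod := by
          rw [mul_assoc, ih']; simp only [mul_assoc]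
      _ = T * s x * (a x * (l.map s).prod) * (l.map a).prod := by
          rw [h1 x (by simp)]; simp only [mul_assoc]
      _ = _ := by rw [hc.eq]; simp only [mul_assoc]

theorem sq_list {M α : Type*} [Monoid M] (l : List α) (a : α → M)
    (h1 : ∀ i ∈ l, a i * a i = 1) (h2 : ∀ i ∈ l, ∀ k ∈ l, Commute (a i) (a k)) :
    (l.map a).prod * (l.map a).prod = 1 := by
  induction l with
  | nil => simp
  | cons x l ih =>
    have ih' := ih (fun i hi => h1 i (List.mem_cons_of_mem _ hi))
      (fun i hi k hk => h2 i (List.mem_cons_of_mem _ hi) k (List.mem_cons_of_mem _ hk))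
    have hc : Commute (a x) (l.map a).prod := by
      apply Commute.list_prod_right
      intro y hy
      obtain ⟨k, hk, rfl⟩ := List.mem_map.1 hy
      exact h2 x (by simp) k (by simp [hk])
    simp only [List.map_cons, List.prod_cons]
    rw [hc.symm.mul_mul_mul_comm, h1 x (by simp), ih', one_mul]

def kf {L : ℕ} (u v : Fin L) : Op L := if u < v then ktFactor u v else 1

theorem comm_kf {L : ℕ} (T : Op L) (u v : Fin L)
    (h : u < v → Commute T (site qz u * site qx v)) : Commute (kf u v) T := by
  unfold kf
  split_ifs with huv
  · rw [ktFactor_eq u v huv.ne]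
    exact ((Commute.one_right T).sub_right ((h huv).smul_right _)).symm
  · exact Commute.one_left _

theorem comm_site_kf {L : ℕ} (A : M3) (u v w : Fin L) (h1 : u ≠ w ∨ Commute A qz)
    (h2 : v ≠ w ∨ Commute A qx) : Commute (kf u v) (site A w) := by
  refine comm_kf _ _ _ fun _ => Commute.mul_right ?_ ?_
  · exact site_comm _ _ _ _ (h1.imp Ne.symm id)
  · exact site_comm _ _ _ _ (h2.imp Ne.symm id)

theorem kf_comm_kf {L : ℕ} (u v u' v' : Fin L) : Commute (kf u v) (kf u' v') := by
  refine comm_kf _ _ _ fun _ => comm_kf _ _ _ fun _ => ?_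
  refine Commute.mul_right (Commute.mul_left ?_ ?_) (Commute.mul_left ?_ ?_) <;>
  refine site_comm _ _ _ _ (Or.inr ?_)
  · exact Commute.refl _
  · exact qxqz
  · exact qxqz.symm
  · exact Commute.refl _

theorem kf_sq {L : ℕ} (u v : Fin L) : kf u v * kf u v = 1 := by
  unfold kf
  split_ifs with huv
  · rw [ktFactor_eq u v huv.ne]
    have : site qz u * site qx v * (site qz u * site qx v) = site qz u * site qx v := by
      rw [(site_comm qx qz v u (Or.inl huv.ne')).mul_mul_mul_comm, site_mul, site_mul, qzqz, qxqx]
    simp only [mul_sub, sub_mul, mul_one, one_mul, smul_mul_assoc, mul_smul_comm, this]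
    module
  · simp

theorem UKT_eq (L : ℕ) : UKT L =
    ((List.finRange L).map fun u => ((List.finRange L).map fun v => kf u v).prod).prod := rfl

theorem row_comm {L : ℕ} (T : Op L) (u : Fin L) (l : List (Fin L)) (h : ∀ v, Commute (kf u v) T) :
    Commute (l.map fun v => kf u v).prod T := by
  apply Commute.list_prod_left
  intro y hy
  obtain ⟨k, hk, rfl⟩ := List.mem_map.1 hy
  exact h k

theorem UU (L : ℕ) : UKT L * UKT L = 1 := by
  rw [UKT_eq]
  apply sq_list
  · intro u _
    apply sq_list
    · intro v _; exact kf_sq u v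
    · intro v _ w _; exact kf_comm_kf _ _ _ _
  · intro u _ w _
    apply row_comm
    intro v
    refine (row_comm _ _ _ ?_).symm
    intro v'
    exact kf_comm_kf _ _ _ _

theorem U_push {L : ℕ} (T : Op L) (s : Fin L → Fin L → Op L)
    (h1 : ∀ u v, kf u v * T = T * s u v * kf u v)
    (h2 : ∀ u v u' v', Commute (kf u v) (s u' v')) :
    UKT L * T = T * ((List.finRange L).map fun u =>
      ((List.finRange L).map fun v => s u v).prod).prod * UKT L := by
  rw [UKT_eq]
  apply push_list
  · intro u _
    apply push_list
    · intro v _; exact h1 u v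
    · intro v _ w _; exact h2 _ _ _ _
  · intro u _ w _
    apply row_comm
    intro v
    apply Commute.list_prod_right
    intro y hy
    obtain ⟨k, hk, rfl⟩ := List.mem_map.1 hy
    exact h2 _ _ _ _

def aS {L : ℕ} (k : Fin L) : Op L := tens (fun w => if k < w then Rx else 1)
def bS {L : ℕ} (k : Fin L) : Op L := tens (fun w => if w < k then Rz else 1)

theorem Rx_qz : Commute Rx qz := by
  rw [Rx_q]; exact (Commute.one_left _).sub_left (qxqz.smul_left _)
theorem Rx_qx : Commute Rx qx := by
  rw [Rx_q]; exact (Commute.one_left _).sub_left ((Commute.refl _).smul_left _)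
theorem Rz_qz : Commute Rz qz := by
  rw [Rz_q]; exact (Commute.one_left _).sub_left ((Commute.refl _).smul_left _)
theorem Rz_qx : Commute Rz qx := by
  rw [Rz_q]; exact (Commute.one_left _).sub_left (qxqz.symm.smul_left _)
theorem Sx_qx : Commute Sx qx := by
  rw [← SxSx]; exact (Commute.refl _).mul_right (Commute.refl _)
theorem Sz_qz : Commute Sz qz := by
  rw [← SzSz]; exact (Commute.refl _).mul_right (Commute.refl _)

theorem abs_push {R : Type*} [Ring R] [Algebra ℂ R] (p q T : R) (hpq : Commute p q) (hqT : Commute q T)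
    (hq : q * q = q) (hp : p * T = T - T * p) :
    (1 - (2:ℂ) • (p * q)) * T = T * (1 - (2:ℂ) • q) * (1 - (2:ℂ) • (p * q)) := by
  have e1 : p * q * T = T * q - T * (p * q) := by
    rw [mul_assoc, hqT.eq, ← mul_assoc, hp, sub_mul, mul_assoc]
  have e2 : q * (p * q) = p * q := by rw [← mul_assoc, ← hpq.eq, mul_assoc, hq]
  simp only [mul_sub, sub_mul, mul_one, one_mul, smul_mul_assoc, mul_smul_comm, e1, mul_assoc T, e2]
  module

theorem site_R {L : ℕ} (q : M3) (v : Fin L) :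
    site (1 - (2:ℂ) • q) v = 1 - (2:ℂ) • site q v := by
  have : (1 - (2:ℂ) • q) = 1 + (-2:ℂ) • q := by module
  rw [this, site_add, site_smul, site_one]; module

theorem U_Sx {L : ℕ} (k : Fin L) : UKT L * site Sx k = site Sx k * aS k * UKT L := by
  have := U_push (site Sx k) (fun u v => if k = u then site (if k < v then Rx else 1) v else 1) ?_ ?_
  · rw [this]
    congr 2
    have e : ∀ u : Fin L, ((List.finRange L).map fun v =>
        if k = u then site (if k < v then Rx else 1) v else 1).prod =
        if k = u then aS k else 1 := by
      intro u
      by_cases h : k = u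
      · simp only [if_pos h]
        exact site_list (fun v => if k < v then Rx else 1)
      · simp [if_neg h]
    simp only [e]
    rw [prod_ite_single _ (List.nodup_finRange L)]
    simp
  · intro u v
    by_cases h : k = u
    · subst h
      simp only [if_true]
      by_cases hv : k < v
      · simp only [kf, if_pos hv]
        rw [ktFactor_eq _ _ hv.ne, Rx_q, site_R]
        apply abs_push
        · exact site_comm _ _ _ _ (Or.inl hv.ne)
        · exact site_comm _ _ _ _ (Or.inl hv.ne')
        · rw [site_mul, qxqx]
        · rw [site_mul, site_mul, qzSx]
          have : Sx - Sx * qz = Sx + (-1:ℂ) • (Sx * qz) := by module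
          rw [this, site_add, site_smul]; module
      · simp [kf, if_neg hv, site_one]
    · simp only [if_neg h, mul_one]
      exact comm_site_kf _ _ _ _ (Or.inl (Ne.symm h)) (Or.inr Sx_qx)
  · intro u v u' v'
    split_ifs
    · exact comm_site_kf _ _ _ _ (Or.inr Rx_qz) (Or.inr Rx_qx)
    · rw [site_one]; exact Commute.one_right _
    · exact Commute.one_right _

theorem U_Sz {L : ℕ} (k : Fin L) : UKT L * site Sz k = site Sz k * bS k * UKT L := by
  have := U_push (site Sz k) (fun u v => if k = v then site (if u < k then Rz else 1) u else 1) ?_ ?_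
  · rw [this]
    congr 2
    have e : ∀ u : Fin L, ((List.finRange L).map fun v =>
        if k = v then site (if u < k then Rz else 1) u else 1).prod =
        site (if u < k then Rz else 1) u := by
      intro u
      rw [prod_ite_single _ (List.nodup_finRange L)]
      simp
    simp only [e]
    exact site_list (fun u => if u < k then Rz else 1)
  · intro u v
    by_cases h : k = v
    · subst h
      simp only [if_true]
      by_cases hv : u < k
      · simp only [kf, if_pos hv]
        rw [ktFactor_eq _ _ hv.ne, Rz_q, site_R, (site_comm qz qx u k (Or.inl hv.ne)).eq]
        apply abs_push
        · exact site_comm _ _ _ _ (Or.inl hv.ne')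
        · exact site_comm _ _ _ _ (Or.inl hv.ne)
        · rw [site_mul, qzqz]
        · rw [site_mul, site_mul, qxSz]
          have : Sz - Sz * qx = Sz + (-1:ℂ) • (Sz * qx) := by module
          rw [this, site_add, site_smul]; module
      · simp [kf, if_neg hv, site_one]
    · simp only [if_neg h, mul_one]
      exact comm_site_kf _ _ _ _ (Or.inr Sz_qz) (Or.inl (Ne.symm h))
  · intro u v u' v'
    split_ifs
    · exact comm_site_kf _ _ _ _ (Or.inr Rz_qz) (Or.inr Rz_qx)
    · rw [site_one]; exact Commute.one_right _
    · exact Commute.one_right _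

theorem RxRz : Commute Rx Rz := by
  rw [Rz_q]; exact (Commute.one_right _).sub_right (Rx_qz.smul_right _)

theorem aS_site {L : ℕ} (A : M3) (k : Fin L) : aS k * site A k = site A k * aS k := by
  rw [aS, site_eq, tens_mul, tens_mul]; congr 1; funext w
  simp only [Pi.mul_apply]
  split_ifs <;> simp_all
theorem bS_site {L : ℕ} (A : M3) (k : Fin L) : bS k * site A k = site A k * bS k := by
  rw [bS, site_eq, tens_mul, tens_mul]; congr 1; funext w
  simp only [Pi.mul_apply]
  split_ifs <;> simp_all
theorem aS_bS {L : ℕ} (k : Fin L) : aS k * bS k = bS k * aS k := by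
  rw [bS, aS, tens_mul, tens_mul]; congr 1; funext w
  simp only [Pi.mul_apply]
  split_ifs <;> simp [RxRz.eq]

theorem U_Sy {L : ℕ} (k : Fin L) : UKT L * site Sy k = site Sy k * (bS k * aS k) * UKT L := by
  have e : site Sy k = (-I) • (site Sz k * site Sx k + (-1:ℂ) • (site Sx k * site Sz k)) := by
    rw [site_mul, site_mul, ← site_smul, ← site_add, ← site_smul, Sy_comm]
    congr 1; module
  have h1 : UKT L * (site Sz k * site Sx k) = site Sz k * site Sx k * (bS k * aS k) * UKT L := by
    rw [← mul_assoc, U_Sz, mul_assoc _ (UKT L), U_Sx]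
    simp only [← mul_assoc]
    rw [mul_assoc (site Sz k), bS_site]
    simp only [← mul_assoc]
  have h2 : UKT L * (site Sx k * site Sz k) = site Sx k * site Sz k * (bS k * aS k) * UKT L := by
    rw [← mul_assoc, U_Sx, mul_assoc _ (UKT L), U_Sz, ← aS_bS]
    simp only [← mul_assoc]
    rw [mul_assoc (site Sx k), aS_site]
    simp only [← mul_assoc]
  rw [e]
  simp only [mul_smul_comm, smul_mul_assoc, mul_add, add_mul, h1, h2]

theorem U_pair {L : ℕ} (A B s t R : Op L) (hA : UKT L * A = A * s * UKT L)
    (hB : UKT L * B = B * t * UKT L) (h : A * s * (B * t) = R) :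
    UKT L * (A * B) * UKT L = R := by
  rw [← mul_assoc, hA, mul_assoc _ (UKT L) B, hB, ← mul_assoc, mul_assoc _ (UKT L), UU, mul_one, h]

theorem dual_eq {L : ℕ} (j : Fin L) (hj : (j : ℕ) + 1 < L) :
    UKT L * heis j ⟨(j : ℕ) + 1, hj⟩ * UKT L =
      (-1:ℂ) • (site Sx j * site Sx ⟨(j : ℕ) + 1, hj⟩) + site Ya j * site Yb ⟨(j : ℕ) + 1, hj⟩
      + (-1:ℂ) • (site Sz j * site Sz ⟨(j : ℕ) + 1, hj⟩) := by
  generalize hk : (⟨(j : ℕ) + 1, hj⟩ : Fin L) = k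
  have hk' : (k : ℕ) = j + 1 := by rw [← hk]
  have f1 : j < k := by rw [Fin.lt_def]; omega
  have f2 : ¬ k < j := f1.not_gt
  have f3 : j ≠ k := f1.ne
  have f4 : k ≠ j := f1.ne'
  unfold heis
  rw [mul_add, mul_add, add_mul, add_mul]
  have tri : ∀ w : Fin L, (w < j ∧ w < k ∧ w ≠ j ∧ w ≠ k ∧ ¬ j < w ∧ ¬ k < w) ∨
      (w = j ∧ w < k ∧ w ≠ k ∧ ¬ k < w) ∨ (w = k ∧ j < w ∧ w ≠ j ∧ ¬ w < j) ∨
      (¬ w < j ∧ ¬ w < k ∧ w ≠ j ∧ w ≠ k ∧ j < w ∧ k < w) := by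
    intro w
    simp only [Fin.lt_def, ne_eq, Fin.ext_iff]
    omega
  congr 1
  congr 1
  · refine U_pair _ _ _ _ _ (U_Sx j) (U_Sx k) ?_
    rw [← mul_smul_comm, ← site_smul, ← RxSx]
    simp only [site_eq, aS, tens_mul]
    congr 1; funext w
    simp only [Pi.mul_apply]
    rcases tri w with h | h | h | h <;> simp [h, f1, f2, f3, f4, RxRx]
  · refine U_pair _ _ _ _ _ (U_Sy j) (U_Sy k) ?_
    simp only [site_eq, aS, bS, tens_mul, Ya, Yb]
    congr 1; funext w
    simp only [Pi.mul_apply]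
    rcases tri w with h | h | h | h <;> simp [h, f1, f2, f3, f4, RxRx, RzRz]
  · refine U_pair _ _ _ _ _ (U_Sz j) (U_Sz k) ?_
    rw [← smul_mul_assoc, ← site_smul, ← SzRz]
    simp only [site_eq, bS, tens_mul]
    congr 1; funext w
    simp only [Pi.mul_apply]
    rcases tri w with h | h | h | h <;> simp [h, f1, f2, f3, f4, RzRz]

/-- The Kennedy–Tasaki dual of the Heisenberg bond commutes with the global
quarter-turn `Y_{π/2} = ∏_k exp(−i(π/2)Sʸ_k)` and with the global π-rotation
`Z_π = ∏_k exp(−iπSᶻ_k)`; that is, it respects the `ℤ₄^y ⋊ ℤ₂^z` symmetry. -/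
theorem dual_bond_symmetry (L : ℕ) (hL : 2 ≤ L) (j : Fin L) (hj : (j : ℕ) + 1 < L) :
    Commute (UKT L * heis j ⟨(j : ℕ) + 1, hj⟩ * UKT L)
        (globalProd L Sy (-(((Real.pi / 2 : ℝ) : ℂ) * I))) ∧
      Commute (UKT L * heis j ⟨(j : ℕ) + 1, hj⟩ * UKT L)
        (globalProd L Sz (-((Real.pi : ℂ) * I))) := by
  rw [dual_eq, globalProd_eq _ SyCube, globalProd_eq _ SzCube, yM_eq, zM_eq]
  constructor
  · show _ = _
    rw [add_mul, add_mul, smul_mul_assoc, smul_mul_assoc,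
      bond_conj (c := 1) _ _ _ _ _ _ _ _ _ (by norm_num) yX yX,
      bond_conj (c := 1) _ _ _ _ _ _ _ _ _ (by norm_num) yZ yZ,
      bond_conj (c := 1) _ _ _ _ _ _ _ _ _ (by norm_num) yA yB]
    simp only [mul_add, mul_smul_comm, one_smul]
    abel
  · show _ = _
    rw [add_mul, add_mul, smul_mul_assoc, smul_mul_assoc,
      bond_conj (c := 1) _ _ _ _ _ _ _ _ _ (by norm_num) zX zX,
      bond_conj (c := 1) _ _ _ _ _ _ _ _ _ (by norm_num) zZ zZ,
      bond_conj (c := 1) _ _ _ _ _ _ _ _ _ (by norm_num) zA zB]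
    simp only [mul_add, mul_smul_comm, one_smul]

end
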